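/- Let H be a complex Hilbert space, A and B positive bounded self-adjoint operators on H, P an orthogonal projection on H, α > 0, and c > 0. Assume that ‖(αI + A)^{1/2} ∘ (I − P)‖² ≤ 3α and ‖(αI + B) ∘ (αI + A)^{-1}‖ ≤ c. Then αI + P B P is invertible and ‖(αI + B) ∘ (αI + P B P)^{-1} ∘ P‖ ≤ 1 + (√3/2)·√c. -/

import Mathlib

open ContinuousLinearMap

section helpers
variable {H : Type*} [NormedAddCommGroup H] [InnerProductSpace ℂ H] [CompleteSpace H]

lemma aux_smul_pos (α : ℝ) (hα : 0 < α) : ((α : ℂ) • (1 : H →L[ℂ] H)).IsPositive := by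
  have h1 : (1 : H →L[ℂ] H).IsPositive := isPositive_one
  exact h1.smul_of_nonneg (by exact_mod_cast hα.le)

lemma aux_pos (T : H →L[ℂ] H) (hT : T.IsPositive) (α : ℝ) (hα : 0 < α) :
    ((α : ℂ) • (1 : H →L[ℂ] H) + T).IsPositive :=
  (aux_smul_pos α hα).add hT

lemma aux_unit (T : H →L[ℂ] H) (hT : T.IsPositive) (α : ℝ) (hα : 0 < α) :
    IsUnit ((α : ℂ) • (1 : H →L[ℂ] H) + T) := by
  have hu : IsUnit ((α : ℂ) • (1 : H →L[ℂ] H)) := by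
    have h0 : (α : ℂ) ≠ 0 := by exact_mod_cast hα.ne'
    refine (isUnit_iff_exists).2 ⟨(α : ℂ)⁻¹ • 1, ?_, ?_⟩ <;>
      rw [smul_mul_smul_comm, mul_one]
    · rw [mul_inv_cancel₀ h0, one_smul]
    · rw [inv_mul_cancel₀ h0, one_smul]
  have hp : IsStrictlyPositive ((α : ℂ) • (1 : H →L[ℂ] H)) :=
    ⟨(nonneg_iff_isPositive _).2 (aux_smul_pos α hα), hu⟩
  exact (hp.add_nonneg ((nonneg_iff_isPositive _).2 hT)).isUnit

lemma aux_sq (T : H →L[ℂ] H) (hT : IsSelfAdjoint T) (v : H) :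
    (inner ℂ (T (T v)) v).re = ‖T v‖ ^ 2 := by
  have h := hT.isSymmetric (T v) v
  simp only [coe_coe] at h
  rw [h, inner_self_eq_norm_sq_to_K]
  norm_cast

lemma aux_re (α : ℝ) (z : H) : (inner ℂ ((α : ℂ) • z) z).re = α * ‖z‖ ^ 2 := by
  rw [inner_smul_left, inner_self_eq_norm_sq_to_K, Complex.conj_ofReal, Complex.re_ofReal_mul]
  congr 1
  norm_cast

lemma aux_heinz (X Y Q : H →L[ℂ] H) (hX : X.IsPositive) (hY : Y.IsPositive)
    (hQ : Q ∘L Y = 1) (c : ℝ) (hc : 0 < c) (h : ‖X ∘L Q‖ ≤ c) (v : H) :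
    (inner ℂ (X v) v).re ≤ c * (inner ℂ (Y v) v).re := by
  have hcY : ((c : ℂ) • Y).IsPositive := hY.smul_of_nonneg (by exact_mod_cast hc.le)
  have hle : X * X ≤ ((c : ℂ) • Y) * ((c : ℂ) • Y) := by
    rw [ContinuousLinearMap.le_def, isPositive_def']
    refine ⟨?_, fun x => ?_⟩
    · exact (IsSelfAdjoint.commute_iff hcY.isSelfAdjoint hcY.isSelfAdjoint |>.1 rfl).sub
        (IsSelfAdjoint.commute_iff hX.isSelfAdjoint hX.isSelfAdjoint |>.1 rfl)
    · have h1 := aux_sq X hX.isSelfAdjoint x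
      have h2 := aux_sq _ hcY.isSelfAdjoint x
      have h3 : ‖X x‖ ≤ ‖((c : ℂ) • Y) x‖ := by
        have e : X x = (X ∘L Q) (Y x) := by
          have := congrArg (fun T : H →L[ℂ] H => T x) hQ
          simp only [comp_apply, one_apply] at this
          simp [this]
        rw [e, smul_apply, norm_smul, Complex.norm_real, Real.norm_of_nonneg hc.le]
        exact (le_opNorm _ _).trans (by gcongr)
      have h4 : ((((c : ℂ) • Y) * ((c : ℂ) • Y) - X * X).reApplyInnerSelf x)
          = ‖((c : ℂ) • Y) x‖ ^ 2 - ‖X x‖ ^ 2 := by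
        rw [← h1, ← h2, reApplyInnerSelf, sub_apply, inner_sub_left]
        rfl
      rw [h4]
      have := pow_le_pow_left₀ (norm_nonneg _) h3 2
      linarith
  have h5 := CFC.sqrt_le_sqrt _ _ hle
  rw [CFC.sqrt_mul_self X ((nonneg_iff_isPositive _).2 hX),
    CFC.sqrt_mul_self _ ((nonneg_iff_isPositive _).2 hcY), ContinuousLinearMap.le_def] at h5
  have h6 := h5.re_inner_nonneg_left v
  rw [sub_apply, inner_sub_left, smul_apply, inner_smul_left] at h6
  simp at h6
  linarith

lemma aux_sqrt (T : H →L[ℂ] H) (hT : T.IsPositive) :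
    ∃ S : H →L[ℂ] H, S.IsPositive ∧ S ∘L S = T :=
  ⟨CFC.sqrt T, (nonneg_iff_isPositive _).1 (CFC.sqrt_nonneg T),
    CFC.sqrt_mul_sqrt_self T ((nonneg_iff_isPositive _).2 hT)⟩

end helpers

/-- The deterministic operator-theoretic content of Lemma 3.5 of the paper:
let `A`, `B` be positive bounded self-adjoint operators on a complex Hilbert
space, `P` an orthogonal projection, `α > 0` and `c > 0`. If
`‖(αI + A)^{1/2} (I − P)‖² ≤ 3α` (expressed via any positive square root `S` of
`αI + A`) and `‖(αI + B)(αI + A)^{-1}‖ ≤ c` (expressed via any two-sided inverse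
of `αI + A`), then `αI + P B P` is invertible and
`‖(αI + B)(αI + P B P)^{-1} P‖ ≤ 1 + (√3/2) √c`. -/
theorem stmt_18 {H : Type*} [NormedAddCommGroup H] [InnerProductSpace ℂ H] [CompleteSpace H]
    (A B : H →L[ℂ] H) (hA : A.IsPositive) (hB : B.IsPositive)
    (P : H →L[ℂ] H) (hP_sa : IsSelfAdjoint P) (hP_idem : P ∘L P = P)
    (α c : ℝ) (hα : 0 < α) (hc : 0 < c)
    (hyp1 : ∀ S : H →L[ℂ] H, S.IsPositive →
      S ∘L S = (α : ℂ) • (1 : H →L[ℂ] H) + A →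
      ‖S ∘L ((1 : H →L[ℂ] H) - P)‖ ^ 2 ≤ 3 * α)
    (hyp2 : ∀ Q : H →L[ℂ] H,
      Q ∘L ((α : ℂ) • (1 : H →L[ℂ] H) + A) = 1 →
      ((α : ℂ) • (1 : H →L[ℂ] H) + A) ∘L Q = 1 →
      ‖((α : ℂ) • (1 : H →L[ℂ] H) + B) ∘L Q‖ ≤ c) :
    IsUnit ((α : ℂ) • (1 : H →L[ℂ] H) + P ∘L B ∘L P) ∧
    ∀ Q : H →L[ℂ] H,
      Q ∘L ((α : ℂ) • (1 : H →L[ℂ] H) + P ∘L B ∘L P) = 1 →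
      ((α : ℂ) • (1 : H →L[ℂ] H) + P ∘L B ∘L P) ∘L Q = 1 →
      ‖((α : ℂ) • (1 : H →L[ℂ] H) + B) ∘L Q ∘L P‖ ≤
        1 + (Real.sqrt 3 / 2) * Real.sqrt c := by
  have hPBP : (P ∘L B ∘L P).IsPositive := by
    have := hB.conj_adjoint P
    rwa [hP_sa.adjoint_eq] at this
  refine ⟨aux_unit _ hPBP α hα, fun Q _ hQ2 => ?_⟩
  have hPP : ∀ z, P (P z) = P z := fun z => congrArg (fun T : H →L[ℂ] H => T z) hP_idem
  have hPs : ∀ a b, inner ℂ (P a) b = inner ℂ a (P b) := fun a b => hP_sa.isSymmetric a b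
  obtain ⟨S, hS, hSS⟩ := aux_sqrt _ (aux_pos A hA α hα)
  obtain ⟨R, hR, hRR⟩ := aux_sqrt _ hB
  obtain ⟨QA, hQA1, hQA2⟩ := isUnit_iff_exists.1 (aux_unit A hA α hα)
  have hX := hyp2 QA hQA2 hQA1
  have h1 := hyp1 S hS hSS
  refine opNorm_le_bound _ (by positivity) fun x => ?_
  set y := Q (P x) with hy
  have hyeq : (α : ℂ) • y + P (B (P y)) = P x :=
    congrArg (fun T : H →L[ℂ] H => T (P x)) hQ2
  have h0 : (α : ℂ) ≠ 0 := by exact_mod_cast hα.ne'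
  have hPy : P y = y := by
    have h := congrArg P hyeq
    rw [map_add, map_smul, hPP, hPP, ← hyeq] at h
    exact smul_right_injective H h0 (add_right_cancel h)
  rw [hPy] at hyeq
  have hPx : ‖P x‖ ≤ ‖x‖ := by
    have e : ‖P x‖ ^ 2 = (inner ℂ x (P x)).re := by
      rw [← aux_sq P hP_sa x, hPP, hPs]
    have e2 : (inner ℂ x (P x)).re ≤ ‖x‖ * ‖P x‖ := re_inner_le_norm (𝕜 := ℂ) x (P x)
    nlinarith [norm_nonneg x, norm_nonneg (P x)]
  set w := B y - P (B y) with hw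
  have hgoal : (((α : ℂ) • (1 : H →L[ℂ] H) + B) ∘L Q ∘L P) x = P x + w := by
    change (α : ℂ) • y + B y = P x + w
    rw [← hyeq, hw]; abel
  have hPw : P w = 0 := by rw [hw, map_sub, hPP, sub_self]
  have hBR : ∀ z, B z = R (R z) := fun z => by rw [← hRR]; rfl
  have hYS : ∀ z, ((α : ℂ) • (1 : H →L[ℂ] H) + A) z = S (S z) := fun z => by rw [← hSS]; rfl
  have hRy : 4 * α * ‖R y‖ ^ 2 ≤ ‖x‖ ^ 2 := by
    have e : (inner ℂ ((α : ℂ) • y + P (B y)) y).re = α * ‖y‖ ^ 2 + ‖R y‖ ^ 2 := by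
      rw [inner_add_left, hPs, hPy, Complex.add_re, hBR,
        aux_sq R hR.isSelfAdjoint, aux_re]
    rw [hyeq] at e
    have e2 : (inner ℂ (P x) y).re ≤ ‖P x‖ * ‖y‖ := re_inner_le_norm (𝕜 := ℂ) (P x) y
    have e3 : ‖P x‖ * ‖y‖ ≤ ‖x‖ * ‖y‖ := by gcongr
    nlinarith [sq_nonneg (‖x‖ - 2 * α * ‖y‖)]
  have hSw : ‖S w‖ ^ 2 ≤ 3 * α * ‖w‖ ^ 2 := by
    have e : S w = (S ∘L ((1 : H →L[ℂ] H) - P)) w := by simp [hPw]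
    rw [e]
    calc _ ≤ (‖S ∘L ((1 : H →L[ℂ] H) - P)‖ * ‖w‖) ^ 2 := by
          gcongr; exact le_opNorm _ _
      _ ≤ _ := by rw [mul_pow]; gcongr
  have hRw : ‖R w‖ ^ 2 ≤ c * (3 * α * ‖w‖ ^ 2) := by
    have e := aux_heinz _ _ QA (aux_pos B hB α hα) (aux_pos A hA α hα) hQA2 c hc hX w
    rw [hYS, aux_sq S hS.isSelfAdjoint] at e
    have e2 : (inner ℂ (((α : ℂ) • (1 : H →L[ℂ] H) + B) w) w).re = α * ‖w‖ ^ 2 + ‖R w‖ ^ 2 := by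
      change (inner ℂ ((α : ℂ) • w + B w) w).re = _
      rw [inner_add_left, Complex.add_re, hBR,
        aux_sq R hR.isSelfAdjoint, aux_re]
    have e3 : c * ‖S w‖ ^ 2 ≤ c * (3 * α * ‖w‖ ^ 2) := by gcongr
    have e4 : 0 ≤ α * ‖w‖ ^ 2 := by positivity
    linarith
  have hww : ‖w‖ ^ 2 ≤ ‖R y‖ * ‖R w‖ := by
    have e : inner ℂ w w = inner ℂ (R y) (R w) := by
      have e1 : inner ℂ w w = inner ℂ (B y) w := by
        conv_lhs => rw [hw]
        rw [inner_sub_left, hPs, ← hw, hPw]; simp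
      rw [e1, hBR]
      exact hR.isSelfAdjoint.isSymmetric (R y) w
    have e2 : (inner ℂ (R y) (R w)).re ≤ ‖R y‖ * ‖R w‖ := re_inner_le_norm (𝕜 := ℂ) _ _
    rw [← e, inner_self_eq_norm_sq_to_K] at e2
    norm_cast at e2
  have hwx : ‖w‖ ≤ Real.sqrt 3 / 2 * Real.sqrt c * ‖x‖ := by
    have hs : (Real.sqrt 3 / 2 * Real.sqrt c * ‖x‖) ^ 2 = 3 * c / 4 * ‖x‖ ^ 2 := by
      rw [mul_pow, mul_pow, div_pow, Real.sq_sqrt (by norm_num), Real.sq_sqrt hc.le]; ring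
    refine (sq_le_sq₀ (norm_nonneg _) (by positivity)).1 ?_
    rw [hs]
    rcases (norm_nonneg w).eq_or_lt with hz | hz
    · rw [← hz, zero_pow two_ne_zero]; positivity
    · have k1 : (‖w‖ ^ 2) ^ 2 ≤ (‖R y‖ * ‖R w‖) ^ 2 := by gcongr
      have k2 : 4 * α * ‖R y‖ ^ 2 * ‖R w‖ ^ 2 ≤ ‖x‖ ^ 2 * (c * (3 * α * ‖w‖ ^ 2)) := by gcongr
      have k3 : (4 * α * ‖w‖ ^ 2) * ‖w‖ ^ 2 ≤ (4 * α * ‖w‖ ^ 2) * (3 * c / 4 * ‖x‖ ^ 2) := by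
        calc _ = 4 * α * (‖w‖ ^ 2) ^ 2 := by ring
          _ ≤ 4 * α * (‖R y‖ * ‖R w‖) ^ 2 := by gcongr
          _ = 4 * α * ‖R y‖ ^ 2 * ‖R w‖ ^ 2 := by ring
          _ ≤ _ := k2
          _ = _ := by ring
      exact le_of_mul_le_mul_left k3 (by positivity)
  rw [hgoal]
  calc ‖P x + w‖ ≤ ‖P x‖ + ‖w‖ := norm_add_le _ _
    _ ≤ ‖x‖ + Real.sqrt 3 / 2 * Real.sqrt c * ‖x‖ := add_le_add hPx hwx
    _ = _ := by ring
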